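/- Let G be a finite tree (a finite connected acyclic simple graph) with a distinguished root vertex r. If v_1 and v_2 are branching vertices of (G, r) such that the level of v_1 is less than or equal to the level of every branching vertex and the level of v_2 is less than or equal to the level of every branching vertex, then v_1 = v_2. Consequently, if the set of branching vertices is nonempty, there is a unique branching vertex (the first branching vertex) whose level is strictly less than the levels of all other branching vertices. -/

import Mathlib

/-- A vertex `v` of a rooted graph `(G, r)` is *branching* if it has at least two
children, i.e. at least two distinct neighbors whose distance to the root `r` is
`dist r v + 1`. -/
def SimpleGraph.IsBranching {V : Type*} (G : SimpleGraph V) (r v : V) : Prop :=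
  ∃ w₁ w₂ : V, w₁ ≠ w₂ ∧ G.Adj v w₁ ∧ G.Adj v w₂ ∧
    G.dist r w₁ = G.dist r v + 1 ∧ G.dist r w₂ = G.dist r v + 1

theorem exists_parent_aux {V : Type*} (G : SimpleGraph V) (hG : G.Connected) (r w : V) (n : ℕ)
    (h : G.dist r w = n + 1) : ∃ u, G.Adj u w ∧ G.dist r u = n := by
  obtain ⟨p, hp⟩ := hG.exists_walk_length_eq_dist w r
  rw [SimpleGraph.dist_comm, h] at hp
  cases p with
  | nil => simp at hp
  | @cons _ u _ ha q =>
    refine ⟨u, ha.symm, ?_⟩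
    have h1 : G.dist u r ≤ q.length := SimpleGraph.dist_le q
    have h2 : G.dist r w ≤ G.dist r u + G.dist u w := hG.dist_triangle
    have h3 : G.dist u w = 1 := SimpleGraph.dist_eq_one_iff_adj.mpr ha.symm
    rw [SimpleGraph.dist_comm] at h1
    simp only [SimpleGraph.Walk.length_cons] at hp
    omega

theorem level_unique_aux {V : Type*} (G : SimpleGraph V) (hG : G.Connected) (r : V) (n : ℕ) :
    (∀ v, G.IsBranching r v → n ≤ G.dist r v) →
    ∀ a b, G.dist r a = n → G.dist r b = n → a = b := by
  induction n with
  | zero =>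
    intro _ a b ha hb
    rw [hG.dist_eq_zero_iff] at ha hb
    exact ha.symm.trans hb
  | succ n ih =>
    intro hm a b ha hb
    obtain ⟨u, hu, hud⟩ := exists_parent_aux G hG r a n ha
    obtain ⟨v, hv, hvd⟩ := exists_parent_aux G hG r b n hb
    have huv : u = v := ih (fun x hx => by have := hm x hx; omega) u v hud hvd
    subst huv
    by_contra hab
    have := hm u ⟨a, b, hab, hu, hv, by omega, by omega⟩
    omega

/-- In a finite rooted tree `(G, r)`, if `v₁` and `v₂` are branching
vertices whose level (= distance to the root plus one) is minimal among all branching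
vertices, then `v₁ = v₂`.  Consequently, if a branching vertex exists, then there is a
unique branching vertex whose level is strictly less than the levels of all other
branching vertices. -/
theorem first_branching_vertex_unique {V : Type*} [Fintype V] (G : SimpleGraph V)
    (hG : G.IsTree) (r v₁ v₂ : V)
    (h₁ : G.IsBranching r v₁) (h₂ : G.IsBranching r v₂)
    (hmin₁ : ∀ v, G.IsBranching r v → G.dist r v₁ ≤ G.dist r v)
    (hmin₂ : ∀ v, G.IsBranching r v → G.dist r v₂ ≤ G.dist r v) :
    v₁ = v₂ ∧
      ((∃ v, G.IsBranching r v) →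
        ∃! v, G.IsBranching r v ∧
          ∀ w, G.IsBranching r w → w ≠ v → G.dist r v < G.dist r w) := by
  have key := level_unique_aux G hG.connected r _ hmin₁
  refine ⟨key _ _ rfl (le_antisymm (hmin₂ _ h₁) (hmin₁ _ h₂)), fun _ => ⟨v₁, ⟨h₁, ?_⟩, ?_⟩⟩
  · intro w hw hne
    exact lt_of_le_of_ne (hmin₁ w hw) fun he => hne (key _ _ he.symm rfl)
  · rintro y ⟨hy, hlt⟩
    by_contra hne
    have := hlt v₁ h₁ (Ne.symm hne)
    have := hmin₁ y hy
    omega
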